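/- Let L be the canonical α-stable cylindrical Lévy process on G with α ∈ (0,2), and (ψ_n) a sequence of L₂(G,H)-valued step functions. Then ∫₀^T ‖ψ_n(t)‖_HS^α dt → 0 if and only if sup_{γ ∈ S^{1,op}_det} E[‖∫₀^T γψ_n dL‖ ∧ 1] → 0. -/

import Mathlib

open MeasureTheory Filter Topology RealInnerProductSpace

noncomputable section

variable {G : Type} [NormedAddCommGroup G] [InnerProductSpace ℝ G] [CompleteSpace G]
variable {H : Type} [NormedAddCommGroup H] [InnerProductSpace ℝ H] [CompleteSpace H]
variable [MeasurableSpace H] [BorelSpace H] [SecondCountableTopology H]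
variable {Ω : Type} [MeasurableSpace Ω]

/-- `ψ` is an `L₂(G,H)`-valued step function on `[0,T]`. -/
def IsStepHS (bG : HilbertBasis ℕ ℝ G) (T : ℝ) (ψ : ℝ → (G →L[ℝ] H)) : Prop :=
  ∃ (N : ℕ) (tp : Fin (N + 1) → ℝ) (Φ : Fin N → (G →L[ℝ] H)),
    StrictMono tp ∧ tp 0 = 0 ∧ tp (Fin.last N) = T ∧
    (∀ i, Summable fun k => ‖Φ i (bG k)‖ ^ 2) ∧
    ∀ s, s ≠ 0 → ψ s = ∑ i : Fin N,
      if s ∈ Set.Ioc (tp i.castSucc) (tp i.succ) then Φ i else 0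

/-- `γ` is an `L(H,H)`-valued step function on `[0,T]` bounded by `1` in operator norm. -/
def IsStepOp1 (T : ℝ) (γ : ℝ → (H →L[ℝ] H)) : Prop :=
  (∀ s, ‖γ s‖ ≤ 1) ∧
  ∃ (M : ℕ) (sp : Fin (M + 1) → ℝ) (Γop : Fin M → (H →L[ℝ] H)),
    StrictMono sp ∧ sp 0 = 0 ∧ sp (Fin.last M) = T ∧
    ∀ s, s ≠ 0 → γ s = ∑ i : Fin M,
      if s ∈ Set.Ioc (sp i.castSucc) (sp i.succ) then Γop i else 0

/-- `X` is (a version of) the stochastic integral `∫₀^T f dL` of a step function `f` with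
respect to the canonical `α`-stable cylindrical Lévy process `L`, i.e. the sum of the
Radonified increments, characterised in distribution by its characteristic function
`u ↦ exp(-∫₀^T ‖f(t)* u‖^α dt)`. -/
def IsIntegralOf (P : Measure Ω) (X : Ω → H) (T α : ℝ) (f : ℝ → (G →L[ℝ] H)) : Prop :=
  Measurable X ∧ ∀ u : H,
    ∫ ω, Complex.exp (⟪u, X ω⟫ * Complex.I) ∂P
      = Complex.exp (-(∫ t in Set.Ioc 0 T,
          ‖(ContinuousLinearMap.adjoint (f t)) u‖ ^ α : ℝ))

section Gauss

open ProbabilityTheory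

variable {V : Type} [NormedAddCommGroup V] [InnerProductSpace ℝ V] [FiniteDimensional ℝ V]
  [CompleteSpace V] [MeasurableSpace V] [BorelSpace V]

lemma aux_integrable_norm_pow (B : V →L[ℝ] G) (n : ℕ) :
    Integrable (fun v => ‖B v‖ ^ n) (stdGaussian V) := by
  have h1 : MemLp (id : V → V) (n : ENNReal) (stdGaussian V) :=
    IsGaussian.memLp_id _ _ (by simp)
  have h2 := (h1.integrable_norm_pow').const_mul (‖B‖ ^ n)
  refine h2.mono' ?_ ?_
  · exact (Continuous.aestronglyMeasurable (by fun_prop))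
  · refine Eventually.of_forall fun v => ?_
    rw [Real.norm_of_nonneg (by positivity), ← mul_pow]
    gcongr
    exact B.le_opNorm v

lemma aux_integrable_inner_pow (a : V) (n : ℕ) :
    Integrable (fun v => ⟪a, v⟫ ^ n) (stdGaussian V) := by
  refine (aux_integrable_norm_pow (innerSL ℝ a) n).mono' ?_ ?_
  · exact (Continuous.aestronglyMeasurable (by fun_prop))
  · refine Eventually.of_forall fun v => ?_
    simp

lemma aux_map_inner (a : V) :
    (stdGaussian V).map (fun v => ⟪a, v⟫) = (gaussianReal 0 1).map (fun x => ‖a‖ * x) := by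
  have h := IsGaussian.map_eq_gaussianReal (μ := stdGaussian V) (innerSL ℝ a)
  rw [variance_dual_stdGaussian, integral_strongDual_stdGaussian, innerSL_apply_norm] at h
  rw [gaussianReal_map_const_mul]
  have : (fun v => ⟪a, v⟫) = ⇑(innerSL ℝ a) := by ext; simp
  rw [this, h]
  congr 1
  · simp
  · ext; simp

lemma aux_moment (a : V) (n : ℕ) :
    ∫ v, ⟪a, v⟫ ^ n ∂(stdGaussian V) = ‖a‖ ^ n * ∫ x, x ^ n ∂(gaussianReal 0 1) := by
  have h1 : ∫ v, ⟪a, v⟫ ^ n ∂(stdGaussian V)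
      = ∫ y, y ^ n ∂((stdGaussian V).map (fun v => ⟪a, v⟫)) := by
    rw [integral_map (Measurable.aemeasurable (by fun_prop))
      (Continuous.aestronglyMeasurable (by fun_prop))]
  rw [h1, aux_map_inner, integral_map (Measurable.aemeasurable (by fun_prop))
      (Continuous.aestronglyMeasurable (by fun_prop))]
  simp_rw [mul_pow]
  rw [integral_const_mul]

lemma aux_second (a : V) : ∫ v, ⟪a, v⟫ ^ 2 ∂(stdGaussian V) = ‖a‖ ^ 2 := by
  have h := variance_dual_stdGaussian (E := V) (innerSL ℝ a)
  rw [innerSL_apply_norm, variance_of_integral_eq_zero (by fun_prop)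
    (integral_strongDual_stdGaussian _)] at h
  simpa using h

/-- fourth moment constant -/
def C4 : ℝ := max 2 (∫ x, x ^ 4 ∂(gaussianReal 0 1))

lemma C4_pos : 0 < C4 := lt_of_lt_of_le (by norm_num) (le_max_left 2 _)

lemma aux_cross (a b : V) :
    ∫ v, ⟪a, v⟫ ^ 2 * ⟪b, v⟫ ^ 2 ∂(stdGaussian V) ≤ C4 * (‖a‖ ^ 2 * ‖b‖ ^ 2) := by
  rcases eq_or_ne a 0 with rfl | ha
  · simp
  rcases eq_or_ne b 0 with rfl | hb
  · simp
  have ha' : 0 < ‖a‖ := norm_pos_iff.2 ha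
  have hb' : 0 < ‖b‖ := norm_pos_iff.2 hb
  have h4 : ∀ c : V, c ≠ 0 → ∫ v, ⟪c, v⟫ ^ 4 / ‖c‖ ^ 4 ∂(stdGaussian V) ≤ C4 := by
    intro c hc
    have hc' : 0 < ‖c‖ := norm_pos_iff.2 hc
    rw [integral_div, aux_moment, mul_div_cancel_left₀ _ (by positivity)]
    exact le_max_right _ _
  have hi : ∀ c : V, Integrable (fun v => ⟪c, v⟫ ^ 4 / ‖c‖ ^ 4) (stdGaussian V) := fun c =>
    (aux_integrable_inner_pow c 4).div_const _
  calc ∫ v, ⟪a, v⟫ ^ 2 * ⟪b, v⟫ ^ 2 ∂(stdGaussian V)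
      ≤ ∫ v, (‖a‖ ^ 2 * ‖b‖ ^ 2 / 2) * (⟪a, v⟫ ^ 4 / ‖a‖ ^ 4 + ⟪b, v⟫ ^ 4 / ‖b‖ ^ 4)
          ∂(stdGaussian V) := by
        refine integral_mono_of_nonneg (Eventually.of_forall fun v => by positivity)
          (((hi a).add (hi b)).const_mul _) (Eventually.of_forall fun v => ?_)
        show ⟪a, v⟫ ^ 2 * ⟪b, v⟫ ^ 2 ≤ (‖a‖ ^ 2 * ‖b‖ ^ 2 / 2) *
          (⟪a, v⟫ ^ 4 / ‖a‖ ^ 4 + ⟪b, v⟫ ^ 4 / ‖b‖ ^ 4)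
        generalize ⟪a, v⟫ = x
        generalize ⟪b, v⟫ = y
        have hx : x = ‖a‖ * (x / ‖a‖) := by field_simp
        have hy : y = ‖b‖ * (y / ‖b‖) := by field_simp
        rw [← div_pow, ← div_pow]
        set x' := x / ‖a‖
        set y' := y / ‖b‖
        rw [hx, hy]
        have : 0 ≤ ‖a‖ ^ 2 * ‖b‖ ^ 2 * (x' ^ 2 - y' ^ 2) ^ 2 := by positivity
        nlinarith
    _ = (‖a‖ ^ 2 * ‖b‖ ^ 2 / 2) * (∫ v, ⟪a, v⟫ ^ 4 / ‖a‖ ^ 4 ∂(stdGaussian V)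
          + ∫ v, ⟪b, v⟫ ^ 4 / ‖b‖ ^ 4 ∂(stdGaussian V)) := by
        rw [integral_const_mul, integral_add (hi a) (hi b)]
    _ ≤ (‖a‖ ^ 2 * ‖b‖ ^ 2 / 2) * (C4 + C4) := by
        gcongr
        · exact h4 a ha
        · exact h4 b hb
    _ = _ := by ring

lemma aux_parseval (bG : HilbertBasis ℕ ℝ G) (x : G) : HasSum (fun i => ⟪bG i, x⟫ ^ 2) (‖x‖ ^ 2) := by
  have := bG.hasSum_inner_mul_inner x x
  rw [real_inner_self_eq_norm_sq] at this
  refine this.congr_fun ?_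
  intro i
  rw [real_inner_comm x, sq]

lemma aux_parseval_enn (bG : HilbertBasis ℕ ℝ G) (x : G) :
    ENNReal.ofReal (‖x‖ ^ 2) = ∑' i, ENNReal.ofReal (⟪bG i, x⟫ ^ 2) := by
  rw [← (aux_parseval bG x).tsum_eq]
  exact ENNReal.ofReal_tsum_of_nonneg (fun _ => sq_nonneg _) (aux_parseval bG x).summable

variable (bG : HilbertBasis ℕ ℝ G) (B : V →L[ℝ] G)

lemma aux_inner_adj (i : ℕ) (v : V) :
    ⟪bG i, B v⟫ = ⟪ContinuousLinearMap.adjoint B (bG i), v⟫ := by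
  rw [ContinuousLinearMap.adjoint_inner_left]

lemma aux_EZ (s : ℝ) (hs : HasSum (fun i => ‖ContinuousLinearMap.adjoint B (bG i)‖ ^ 2) s) :
    ∫ v, ‖B v‖ ^ 2 ∂(stdGaussian V) = s := by
  have hs0 : 0 ≤ s := hs.nonneg (fun _ => sq_nonneg _)
  rw [integral_eq_lintegral_of_nonneg_ae (Eventually.of_forall fun v => by positivity)
    (Continuous.aestronglyMeasurable (by fun_prop))]
  simp_rw [aux_parseval_enn bG, aux_inner_adj]
  rw [lintegral_tsum (fun i => Measurable.aemeasurable (by fun_prop))]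
  have : ∀ i, ∫⁻ v, ENNReal.ofReal (⟪ContinuousLinearMap.adjoint B (bG i), v⟫ ^ 2)
      ∂(stdGaussian V) = ENNReal.ofReal (‖ContinuousLinearMap.adjoint B (bG i)‖ ^ 2) := by
    intro i
    rw [← ofReal_integral_eq_lintegral_ofReal (aux_integrable_inner_pow _ 2)
      (Eventually.of_forall fun v => sq_nonneg _), aux_second]
  simp_rw [this]
  rw [← ENNReal.ofReal_tsum_of_nonneg (fun _ => sq_nonneg _) hs.summable, hs.tsum_eq,
    ENNReal.toReal_ofReal hs0]

lemma aux_EZ2 (s : ℝ) (hs : HasSum (fun i => ‖ContinuousLinearMap.adjoint B (bG i)‖ ^ 2) s) :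
    ∫ v, (‖B v‖ ^ 2) ^ 2 ∂(stdGaussian V) ≤ C4 * s ^ 2 := by
  have hs0 : 0 ≤ s := hs.nonneg (fun _ => sq_nonneg _)
  have hC := C4_pos
  rw [integral_eq_lintegral_of_nonneg_ae (Eventually.of_forall fun v => by positivity)
    (Continuous.aestronglyMeasurable (by fun_prop))]
  refine ENNReal.toReal_le_of_le_ofReal (by positivity) ?_
  have h1 : ∀ v, ENNReal.ofReal ((‖B v‖ ^ 2) ^ 2) =
      ∑' i, ∑' j, ENNReal.ofReal (⟪ContinuousLinearMap.adjoint B (bG i), v⟫ ^ 2 *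
        ⟪ContinuousLinearMap.adjoint B (bG j), v⟫ ^ 2) := by
    intro v
    rw [sq (‖B v‖ ^ 2), ENNReal.ofReal_mul (by positivity), aux_parseval_enn bG]
    simp_rw [ENNReal.ofReal_mul (sq_nonneg _), ENNReal.tsum_mul_left, ENNReal.tsum_mul_right,
      aux_inner_adj]
  simp_rw [h1]
  rw [lintegral_tsum (fun i => Measurable.aemeasurable (by fun_prop))]
  have h2 : ∀ i, ∫⁻ v, ∑' j, ENNReal.ofReal (⟪ContinuousLinearMap.adjoint B (bG i), v⟫ ^ 2 *
        ⟪ContinuousLinearMap.adjoint B (bG j), v⟫ ^ 2) ∂(stdGaussian V) ≤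
      ∑' j, ENNReal.ofReal C4 * (ENNReal.ofReal (‖ContinuousLinearMap.adjoint B (bG i)‖ ^ 2) *
        ENNReal.ofReal (‖ContinuousLinearMap.adjoint B (bG j)‖ ^ 2)) := by
    intro i
    rw [lintegral_tsum (fun i => Measurable.aemeasurable (by fun_prop))]
    refine ENNReal.tsum_le_tsum fun j => ?_
    rw [← ENNReal.ofReal_mul (sq_nonneg _), ← ENNReal.ofReal_mul hC.le,
      ← ofReal_integral_eq_lintegral_ofReal _ (Eventually.of_forall fun v => by positivity)]
    · exact ENNReal.ofReal_le_ofReal (aux_cross _ _)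
    · refine (((aux_integrable_inner_pow (ContinuousLinearMap.adjoint B (bG i)) 4).add
        (aux_integrable_inner_pow (ContinuousLinearMap.adjoint B (bG j)) 4))).mono'
        (Continuous.aestronglyMeasurable (by fun_prop)) (Eventually.of_forall fun v => ?_)
      rw [Real.norm_of_nonneg (by positivity)]
      simp only [Pi.add_apply]
      nlinarith [sq_nonneg (⟪ContinuousLinearMap.adjoint B (bG i), v⟫ ^ 2 -
        ⟪ContinuousLinearMap.adjoint B (bG j), v⟫ ^ 2),
        sq_nonneg (⟪ContinuousLinearMap.adjoint B (bG i), v⟫ ^ 2 +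
        ⟪ContinuousLinearMap.adjoint B (bG j), v⟫ ^ 2)]
  refine (ENNReal.tsum_le_tsum h2).trans ?_
  simp_rw [ENNReal.tsum_mul_left, ENNReal.tsum_mul_right]
  rw [← ENNReal.ofReal_tsum_of_nonneg (fun _ => sq_nonneg _) hs.summable, hs.tsum_eq,
    ← ENNReal.ofReal_mul hs0, ← ENNReal.ofReal_mul hC.le, sq]

end Gauss

section Core

open ProbabilityTheory

variable {V : Type} [NormedAddCommGroup V] [InnerProductSpace ℝ V] [FiniteDimensional ℝ V]
  [CompleteSpace V] [MeasurableSpace V] [BorelSpace V]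

lemma aux_EZq_le (bG : HilbertBasis ℕ ℝ G) (B : V →L[ℝ] G) (s q : ℝ) (hq0 : 0 < q) (hq1 : q < 1)
    (hs : HasSum (fun i => ‖ContinuousLinearMap.adjoint B (bG i)‖ ^ 2) s) :
    Integrable (fun v => (‖B v‖ ^ 2) ^ q) (stdGaussian V) ∧
    ∫ v, (‖B v‖ ^ 2) ^ q ∂(stdGaussian V) ≤ s ^ q := by
  have hint : Integrable (fun v => (‖B v‖ ^ 2) ^ q) (stdGaussian V) := by
    have hc : Continuous fun v => ‖B v‖ ^ 2 := by fun_prop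
    refine ((aux_integrable_norm_pow B 2).add (integrable_const (1:ℝ))).mono'
      (hc.measurable.pow_const q).aestronglyMeasurable (Eventually.of_forall fun v => ?_)
    rw [Real.norm_of_nonneg (by positivity)]
    simp only [Pi.add_apply]
    have := rpow_one_add_le_one_add_mul_self (s := ‖B v‖ ^ 2 - 1) (p := q)
      (by nlinarith [sq_nonneg ‖B v‖]) hq0.le hq1.le
    rw [add_sub_cancel] at this
    nlinarith [sq_nonneg ‖B v‖]
  refine ⟨hint, ?_⟩
  have hJ := (Real.concaveOn_rpow hq0.le hq1.le).le_map_integral (μ := stdGaussian V)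
    (f := fun v => ‖B v‖ ^ 2)
    (Real.continuous_rpow_const hq0.le).continuousOn isClosed_Ici
    (Eventually.of_forall fun v => by simp) (aux_integrable_norm_pow B 2) hint
  rwa [aux_EZ bG B s hs] at hJ

lemma aux_EZq_ge (bG : HilbertBasis ℕ ℝ G) (B : V →L[ℝ] G) (s q : ℝ) (hq0 : 0 < q) (hq1 : q < 1)
    (hs : HasSum (fun i => ‖ContinuousLinearMap.adjoint B (bG i)‖ ^ 2) s) :
    Integrable (fun v => (min (‖B v‖ ^ 2) s) ^ q) (stdGaussian V) ∧
    s ^ q / C4 ≤ ∫ v, (min (‖B v‖ ^ 2) s) ^ q ∂(stdGaussian V) := by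
  have hs0 : 0 ≤ s := hs.nonneg (fun _ => sq_nonneg _)
  have hC := C4_pos
  have hC2 : 2 ≤ C4 := le_max_left _ _
  have hint : Integrable (fun v => (min (‖B v‖ ^ 2) s) ^ q) (stdGaussian V) := by
    have hc : Continuous fun v => min (‖B v‖ ^ 2) s := by fun_prop
    refine (integrable_const (s ^ q)).mono'
      (hc.measurable.pow_const q).aestronglyMeasurable (Eventually.of_forall fun v => ?_)
    rw [Real.norm_of_nonneg (by positivity)]
    exact Real.rpow_le_rpow (by positivity) (min_le_right _ _) hq0.le
  refine ⟨hint, ?_⟩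
  rcases hs0.eq_or_lt with rfl | hspos
  · rw [Real.zero_rpow hq0.ne', zero_div]
    exact integral_nonneg fun v => by positivity
  have hlow : ∀ v, s ^ q * (2 / C4 / s * ‖B v‖ ^ 2 - 1 / C4 ^ 2 / s ^ 2 * (‖B v‖ ^ 2) ^ 2)
      ≤ (min (‖B v‖ ^ 2) s) ^ q := by
    intro v
    have hz : 0 ≤ ‖B v‖ ^ 2 := by positivity
    generalize ‖B v‖ ^ 2 = z at hz
    have e : min z s = s * min (z / s) 1 := by
      rw [mul_min_of_nonneg _ _ hs0]; field_simp
    set r := z / s with hr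
    have hr0 : 0 ≤ r := by positivity
    have e2 : 2 / C4 / s * z - 1 / C4 ^ 2 / s ^ 2 * z ^ 2 = 2 * (r / C4) - (r / C4) ^ 2 := by
      rw [hr]; field_simp
    have hm0 : 0 ≤ min r 1 := by positivity
    rw [e2, e, Real.mul_rpow hs0 hm0]
    gcongr
    calc 2 * (r / C4) - (r / C4) ^ 2 ≤ min r 1 := by
          refine le_min ?_ ?_
          · have : r / C4 ≤ r / 2 := by gcongr
            nlinarith [sq_nonneg (r / C4)]
          · nlinarith [sq_nonneg (r / C4 - 1)]
      _ = (min r 1) ^ (1 : ℝ) := by rw [Real.rpow_one]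
      _ ≤ (min r 1) ^ q := by
          rcases hm0.eq_or_lt with h0 | h0
          · rw [← h0, Real.zero_rpow hq0.ne', Real.zero_rpow one_ne_zero]
          · exact Real.rpow_le_rpow_of_exponent_ge h0 (min_le_right _ _) hq1.le
  have i1 := aux_integrable_norm_pow B 2
  have i2 : Integrable (fun v => (‖B v‖ ^ 2) ^ 2) (stdGaussian V) := by
    simp_rw [← pow_mul]; exact aux_integrable_norm_pow B (2 * 2)
  have hmono := integral_mono (((i1.const_mul (2 / C4 / s)).sub
    (i2.const_mul (1 / C4 ^ 2 / s ^ 2))).const_mul (s ^ q)) hint hlow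
  refine le_trans ?_ hmono
  have e3 : ∫ v, s ^ q * (2 / C4 / s * ‖B v‖ ^ 2 - 1 / C4 ^ 2 / s ^ 2 * (‖B v‖ ^ 2) ^ 2)
      ∂(stdGaussian V) = s ^ q * (2 / C4 / s * s - 1 / C4 ^ 2 / s ^ 2 *
        ∫ v, (‖B v‖ ^ 2) ^ 2 ∂(stdGaussian V)) := by
    rw [integral_const_mul, integral_sub (i1.const_mul _) (i2.const_mul _), integral_const_mul,
      integral_const_mul, aux_EZ bG B s hs]
  refine le_trans ?_ e3.ge
  rw [div_eq_mul_inv]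
  gcongr
  have h2 := aux_EZ2 bG B s hs
  have h3 : 1 / C4 ^ 2 / s ^ 2 * ∫ v, (‖B v‖ ^ 2) ^ 2 ∂(stdGaussian V)
      ≤ 1 / C4 ^ 2 / s ^ 2 * (C4 * s ^ 2) := by gcongr
  have h4 : 1 / C4 ^ 2 / s ^ 2 * (C4 * s ^ 2) = C4⁻¹ := by field_simp
  have h5 : 2 / C4 / s * s = 2 * C4⁻¹ := by field_simp
  linarith

lemma aux_fubini (P : Measure Ω) [IsProbabilityMeasure P] (X : Ω → H) (hX : Measurable X)
    (J : V →L[ℝ] H) (Θ : H → ℝ)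
    (hΘ : ∀ u : H, ∫ ω, Complex.exp (⟪u, X ω⟫ * Complex.I) ∂P = Complex.exp (-(Θ u : ℝ))) :
    ∫ ω, Real.exp (-‖ContinuousLinearMap.adjoint J (X ω)‖ ^ 2 / 2) ∂P
      = ∫ v, Real.exp (-(Θ (J v))) ∂(stdGaussian V) := by
  have h1 : ∫ ω, ∫ v, Complex.exp (⟪J v, X ω⟫ * Complex.I) ∂(stdGaussian V) ∂P
      = ∫ v, ∫ ω, Complex.exp (⟪J v, X ω⟫ * Complex.I) ∂P ∂(stdGaussian V) := by
    refine integral_integral_swap ?_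
    refine (integrable_const (1:ℝ)).mono' (Measurable.aestronglyMeasurable ?_)
      (Eventually.of_forall fun p => ?_)
    · have : Measurable fun p : Ω × V => ⟪J p.2, X p.1⟫ :=
        Measurable.inner (J.continuous.measurable.comp measurable_snd) (hX.comp measurable_fst)
      simp only [Function.uncurry_def]
      fun_prop
    · simp [Function.uncurry_def, Complex.norm_exp_ofReal_mul_I]
  have h2 : ∀ ω, ∫ v, Complex.exp (⟪J v, X ω⟫ * Complex.I) ∂(stdGaussian V)
      = ((Real.exp (-‖ContinuousLinearMap.adjoint J (X ω)‖ ^ 2 / 2) : ℝ) : ℂ) := by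
    intro ω
    have := charFun_stdGaussian (E := V) (ContinuousLinearMap.adjoint J (X ω))
    rw [charFun_apply] at this
    simp_rw [ContinuousLinearMap.adjoint_inner_right] at this
    rw [this]; push_cast; rfl
  simp_rw [h2, hΘ, ← Complex.ofReal_neg, ← Complex.ofReal_exp] at h1
  rw [integral_complex_ofReal, integral_complex_ofReal] at h1
  exact_mod_cast h1

variable (P : Measure Ω) [IsProbabilityMeasure P]

lemma aux_int_exp (f : Ω → ℝ) (hf : Measurable f) (h0 : ∀ ω, 0 ≤ f ω) :
    Integrable (fun ω => Real.exp (- f ω)) P := by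
  refine (integrable_const (1:ℝ)).mono' (Measurable.aestronglyMeasurable (by fun_prop))
    (Eventually.of_forall fun ω => ?_)
  rw [Real.norm_of_nonneg (Real.exp_pos _).le]
  exact Real.exp_le_one_iff.2 (by linarith [h0 ω])

lemma aux_V (X : Ω → H) (hX : Measurable X) (bG : HilbertBasis ℕ ℝ G)
    (J : V →L[ℝ] H) (R : Finset (G →L[ℝ] H)) (w : (G →L[ℝ] H) → ℝ) (hw : ∀ A, 0 ≤ w A)
    (q : ℝ) (hq0 : 0 < q) (hq1 : q < 1) (s : (G →L[ℝ] H) → ℝ)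
    (hs : ∀ A ∈ R, HasSum (fun i => ‖ContinuousLinearMap.adjoint J (A (bG i))‖ ^ 2) (s A))
    (hΘ : ∀ u : H, ∫ ω, Complex.exp (⟪u, X ω⟫ * Complex.I) ∂P
      = Complex.exp (-(∑ A ∈ R, w A * (‖ContinuousLinearMap.adjoint A u‖ ^ 2) ^ q : ℝ))) :
    ∫ ω, (1 - Real.exp (-(‖ContinuousLinearMap.adjoint J (X ω)‖ ^ 2 / 2))) ∂P
      ≤ ∑ A ∈ R, w A * s A ^ q ∧
    (1 - Real.exp (-(∑ A ∈ R, w A * s A ^ q))) / C4 ≤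
    ∫ ω, (1 - Real.exp (-(‖ContinuousLinearMap.adjoint J (X ω)‖ ^ 2 / 2))) ∂P := by
  have hC := C4_pos
  set Y : V → ℝ := fun v => ∑ A ∈ R, w A * (‖ContinuousLinearMap.adjoint A (J v)‖ ^ 2) ^ q with hY
  have hYm : Measurable Y := by
    rw [hY]
    refine Finset.measurable_sum _ fun A _ => ?_
    have : Continuous fun v => ‖ContinuousLinearMap.adjoint A (J v)‖ ^ 2 := by fun_prop
    exact (this.measurable.pow_const q).const_mul _
  have hY0 : ∀ v, 0 ≤ Y v := fun v => Finset.sum_nonneg fun A _ =>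
    mul_nonneg (hw A) (by positivity)
  have hfub := aux_fubini P X hX J _ hΘ
  have hE : ∫ ω, (1 - Real.exp (-(‖ContinuousLinearMap.adjoint J (X ω)‖ ^ 2 / 2))) ∂P
      = ∫ v, (1 - Real.exp (-(Y v))) ∂(stdGaussian V) := by
    rw [integral_sub (integrable_const _)
      (aux_int_exp P (fun ω => ‖ContinuousLinearMap.adjoint J (X ω)‖ ^ 2 / 2)
      (by fun_prop) (fun ω => by positivity)),
      integral_sub (integrable_const _) (aux_int_exp _ Y hYm hY0)]
    simp_rw [neg_div] at hfub
    rw [hfub]; simp [hY]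
  have hsB : ∀ A ∈ R, HasSum (fun i => ‖ContinuousLinearMap.adjoint
      ((ContinuousLinearMap.adjoint A).comp J) (bG i)‖ ^ 2) (s A) := by
    intro A hA
    have := hs A hA
    simpa [ContinuousLinearMap.adjoint_comp] using this
  have hup := fun A hA => aux_EZq_le bG ((ContinuousLinearMap.adjoint A).comp J) (s A) q hq0 hq1
    (hsB A hA)
  have hlo := fun A hA => aux_EZq_ge bG ((ContinuousLinearMap.adjoint A).comp J) (s A) q hq0 hq1
    (hsB A hA)
  simp only [ContinuousLinearMap.comp_apply] at hup hlo
  have hYi : Integrable Y (stdGaussian V) := by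
    rw [hY]
    exact integrable_finsetSum _ fun A hA => (hup A hA).1.const_mul _
  have hexpi : Integrable (fun v => 1 - Real.exp (-(Y v))) (stdGaussian V) :=
    (integrable_const _).sub (aux_int_exp _ Y hYm hY0)
  rw [hE]
  constructor
  · calc ∫ v, (1 - Real.exp (-(Y v))) ∂(stdGaussian V) ≤ ∫ v, Y v ∂(stdGaussian V) := by
          refine integral_mono hexpi hYi fun v => ?_
          have := Real.add_one_le_exp (-(Y v))
          show 1 - Real.exp (-(Y v)) ≤ Y v
          linarith
      _ = ∑ A ∈ R, w A * ∫ v, (‖ContinuousLinearMap.adjoint A (J v)‖ ^ 2) ^ q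
            ∂(stdGaussian V) := by
          rw [hY, integral_finsetSum _ fun A hA => (hup A hA).1.const_mul _]
          simp_rw [integral_const_mul]
      _ ≤ _ := Finset.sum_le_sum fun A hA => mul_le_mul_of_nonneg_left (hup A hA).2 (hw A)
  · set I := ∑ A ∈ R, w A * s A ^ q with hI
    have hs0 : ∀ A ∈ R, 0 ≤ s A := fun A hA => (hs A hA).nonneg (fun _ => sq_nonneg _)
    have hI0 : 0 ≤ I := Finset.sum_nonneg fun A hA =>
      mul_nonneg (hw A) (Real.rpow_nonneg (hs0 A hA) _)
    have hpos : 0 ≤ ∫ v, (1 - Real.exp (-(Y v))) ∂(stdGaussian V) := by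
      refine integral_nonneg fun v => ?_
      have : Real.exp (-(Y v)) ≤ 1 := Real.exp_le_one_iff.2 (by linarith [hY0 v])
      show 0 ≤ 1 - Real.exp (-(Y v))
      linarith
    rcases hI0.eq_or_lt with h0 | hIpos
    · rw [← h0]; simpa using hpos
    set Y' : V → ℝ := fun v => ∑ A ∈ R, w A *
      (min (‖ContinuousLinearMap.adjoint A (J v)‖ ^ 2) (s A)) ^ q with hY'
    have hY'i : Integrable Y' (stdGaussian V) := by
      rw [hY']
      exact integrable_finsetSum _ fun A hA => (hlo A hA).1.const_mul _
    have hmin0 : ∀ v, ∀ A ∈ R, 0 ≤ min (‖ContinuousLinearMap.adjoint A (J v)‖ ^ 2) (s A) :=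
      fun v A hA => le_min (by positivity) (hs0 A hA)
    have hY'Y : ∀ v, Y' v ≤ Y v := fun v => Finset.sum_le_sum fun A hA =>
      mul_le_mul_of_nonneg_left
        (Real.rpow_le_rpow (hmin0 v A hA) (min_le_left _ _) hq0.le) (hw A)
    have hY'I : ∀ v, Y' v ≤ I := fun v => Finset.sum_le_sum fun A hA =>
      mul_le_mul_of_nonneg_left
        (Real.rpow_le_rpow (hmin0 v A hA) (min_le_right _ _) hq0.le) (hw A)
    have hY'0 : ∀ v, 0 ≤ Y' v := fun v => Finset.sum_nonneg fun A hA =>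
      mul_nonneg (hw A) (Real.rpow_nonneg (hmin0 v A hA) _)
    have hEY' : I / C4 ≤ ∫ v, Y' v ∂(stdGaussian V) := by
      rw [hY', integral_finsetSum _ fun A hA => (hlo A hA).1.const_mul _, hI, Finset.sum_div]
      refine Finset.sum_le_sum fun A hA => ?_
      rw [integral_const_mul, mul_div_assoc]
      exact mul_le_mul_of_nonneg_left (hlo A hA).2 (hw A)
    have hpt : ∀ v, (1 - Real.exp (-I)) / I * Y' v ≤ 1 - Real.exp (-(Y v)) := by
      intro v
      have hc : Real.exp ((Y' v / I) • (-I) + (1 - Y' v / I) • (0 : ℝ)) ≤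
          (Y' v / I) • Real.exp (-I) + (1 - Y' v / I) • Real.exp 0 :=
        convexOn_exp.2 (Set.mem_univ (-I)) (Set.mem_univ 0) (div_nonneg (hY'0 v) hI0)
        (by rw [sub_nonneg, div_le_one hIpos]; exact hY'I v) (by ring)
      simp only [smul_eq_mul, mul_zero, add_zero, Real.exp_zero, mul_one] at hc
      have e : Y' v / I * -I = - Y' v := by field_simp
      rw [e] at hc
      have h6 : Real.exp (-(Y v)) ≤ Real.exp (-(Y' v)) := Real.exp_le_exp.2 (by linarith [hY'Y v])
      have e2 : (1 - Real.exp (-I)) / I * Y' v = Y' v / I - Y' v / I * Real.exp (-I) := by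
        field_simp
      rw [e2]
      linarith
    have hm := integral_mono (hY'i.const_mul ((1 - Real.exp (-I)) / I)) hexpi hpt
    rw [integral_const_mul] at hm
    refine le_trans ?_ hm
    have h7 : 0 ≤ (1 - Real.exp (-I)) / I :=
      div_nonneg (by linarith [Real.exp_le_one_iff.2 (by linarith : -I ≤ 0)]) hI0
    calc (1 - Real.exp (-I)) / C4 = (1 - Real.exp (-I)) / I * (I / C4) := by field_simp
      _ ≤ _ := mul_le_mul_of_nonneg_left hEY' h7

end Core

section Lim

open ProbabilityTheory

variable (P : Measure Ω) [IsProbabilityMeasure P]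

lemma aux_exists_subspaces : ∃ U : ℕ → Submodule ℝ H, (∀ n, FiniteDimensional ℝ (U n)) ∧
    Monotone U ∧ ⊤ ≤ (⨆ n, U n).topologicalClosure := by
  refine ⟨fun n => Submodule.span ℝ (TopologicalSpace.denseSeq H '' Set.Iio n), ?_, ?_, ?_⟩
  · intro n
    exact FiniteDimensional.span_of_finite ℝ ((Set.finite_Iio n).image _)
  · intro m n hmn
    exact Submodule.span_mono (Set.image_mono (Set.Iio_subset_Iio hmn))
  · intro x _
    have hd := (TopologicalSpace.denseRange_denseSeq H) x
    rw [← SetLike.mem_coe, Submodule.topologicalClosure_coe]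
    refine closure_mono ?_ hd
    rintro _ ⟨k, rfl⟩
    refine SetLike.mem_coe.2 (Submodule.mem_iSup_of_mem (k + 1) ?_)
    exact Submodule.subset_span ⟨k, by simp, rfl⟩

lemma aux_main (X : Ω → H) (hX : Measurable X) (bG : HilbertBasis ℕ ℝ G)
    (R : Finset (G →L[ℝ] H)) (w : (G →L[ℝ] H) → ℝ) (hw : ∀ A, 0 ≤ w A)
    (q : ℝ) (hq0 : 0 < q) (hq1 : q < 1)
    (hs : ∀ A ∈ R, Summable (fun i => ‖A (bG i)‖ ^ 2))
    (hΘ : ∀ u : H, ∫ ω, Complex.exp (⟪u, X ω⟫ * Complex.I) ∂P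
      = Complex.exp (-(∑ A ∈ R, w A * (‖ContinuousLinearMap.adjoint A u‖ ^ 2) ^ q : ℝ))) :
    ∫ ω, (1 - Real.exp (-(‖X ω‖ ^ 2 / 2))) ∂P
      ≤ ∑ A ∈ R, w A * (∑' i, ‖A (bG i)‖ ^ 2) ^ q ∧
    (1 - Real.exp (-(∑ A ∈ R, w A * (∑' i, ‖A (bG i)‖ ^ 2) ^ q))) / C4 ≤
    ∫ ω, (1 - Real.exp (-(‖X ω‖ ^ 2 / 2))) ∂P := by
  obtain ⟨U, hfd, hmono, hdense⟩ := aux_exists_subspaces (H := H)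
  have hcomp : ∀ n, CompleteSpace (U n) := fun n => FiniteDimensional.complete ℝ (U n)
  have hnorm : ∀ n x, ‖ContinuousLinearMap.adjoint (U n).subtypeL x‖ = ‖(U n).starProjection x‖ := by
    intro n x
    rw [Submodule.adjoint_subtypeL, Submodule.starProjection_apply, Submodule.coe_norm]
  have hle : ∀ n x, ‖ContinuousLinearMap.adjoint (U n).subtypeL x‖ ≤ ‖x‖ := by
    intro n x
    rw [hnorm]
    exact Submodule.norm_starProjection_apply_le _ x
  have htend : ∀ x, Tendsto (fun n => ‖ContinuousLinearMap.adjoint (U n).subtypeL x‖) atTop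
      (𝓝 ‖x‖) := by
    intro x
    simp_rw [hnorm]
    exact (Submodule.starProjection_tendsto_self U hmono x hdense).norm
  have hsn : ∀ n, ∀ A ∈ R, Summable
      (fun i => ‖ContinuousLinearMap.adjoint (U n).subtypeL (A (bG i))‖ ^ 2) := fun n A hA =>
    (hs A hA).of_nonneg_of_le (fun _ => sq_nonneg _)
      (fun i => pow_le_pow_left₀ (norm_nonneg _) (hle n _) 2)
  have key := fun n => aux_V P X hX bG (U n).subtypeL R w hw q hq0 hq1 _
    (fun A hA => (hsn n A hA).hasSum) hΘ
  have hst : Tendsto (fun n => ∑ A ∈ R, w A *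
      (∑' i, ‖ContinuousLinearMap.adjoint (U n).subtypeL (A (bG i))‖ ^ 2) ^ q) atTop
      (𝓝 (∑ A ∈ R, w A * (∑' i, ‖A (bG i)‖ ^ 2) ^ q)) := by
    refine tendsto_finsetSum _ fun A hA => Tendsto.const_mul _ ?_
    refine Tendsto.rpow_const ?_ (Or.inr hq0.le)
    refine tendsto_tsum_of_dominated_convergence (hs A hA) (fun i => (htend _).pow 2) ?_
    refine Eventually.of_forall fun n i => ?_
    rw [Real.norm_of_nonneg (sq_nonneg _)]
    exact pow_le_pow_left₀ (norm_nonneg _) (hle n _) 2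
  have hEt : Tendsto (fun n => ∫ ω, (1 - Real.exp
      (-(‖ContinuousLinearMap.adjoint (U n).subtypeL (X ω)‖ ^ 2 / 2))) ∂P) atTop
      (𝓝 (∫ ω, (1 - Real.exp (-(‖X ω‖ ^ 2 / 2))) ∂P)) := by
    refine tendsto_integral_of_dominated_convergence (fun _ => 1) (fun n => ?_)
      (integrable_const _) (fun n => Eventually.of_forall fun ω => ?_)
      (Eventually.of_forall fun ω => ?_)
    · exact Measurable.aestronglyMeasurable (by fun_prop)
    · set y := ‖ContinuousLinearMap.adjoint (U n).subtypeL (X ω)‖ ^ 2 / 2 with hy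
      have hy0 : 0 ≤ y := by positivity
      have h1 : Real.exp (-y) ≤ 1 := Real.exp_le_one_iff.2 (by linarith)
      rw [Real.norm_of_nonneg (by linarith)]
      linarith [Real.exp_pos (-y)]
    · exact ((Real.continuous_exp.tendsto _).comp
        (((htend _).pow 2).div_const 2).neg).const_sub 1
  constructor
  · exact le_of_tendsto_of_tendsto' hEt hst fun n => (key n).1
  · refine le_of_tendsto_of_tendsto' ?_ hEt fun n => (key n).2
    exact (((Real.continuous_exp.tendsto _).comp hst.neg).const_sub 1).div_const _

end Lim

section Simple

lemma aux_simple_integral {E : Type} (f : SimpleFunc ℝ E) (μ : Measure ℝ) [IsFiniteMeasure μ]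
    (F : E → ℝ) : ∫ t, F (f t) ∂μ = ∑ x ∈ f.range, μ.real (f ⁻¹' {x}) * F x := by
  classical
  have h : ∀ t, F (f t) = ∑ x ∈ f.range, (f ⁻¹' {x}).indicator (fun _ => F x) t := by
    intro t
    rw [Finset.sum_eq_single (f t)]
    · simp
    · intro b _ hb
      exact Set.indicator_of_notMem (by simpa using hb.symm) _
    · intro hh; exact absurd (f.mem_range_self t) hh
  simp_rw [h]
  rw [integral_finsetSum]
  · refine Finset.sum_congr rfl fun x _ => ?_
    rw [integral_indicator (f.measurableSet_fiber x)]
    simp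
  · intro x _
    exact (integrable_const _).indicator (f.measurableSet_fiber x)

lemma aux_step_simple {E : Type} [AddCommMonoid E] (N : ℕ) (tp : Fin (N + 1) → ℝ) (Φ : Fin N → E) :
    ∃ f : SimpleFunc ℝ E, ∀ s, f s = ∑ i : Fin N,
      if s ∈ Set.Ioc (tp i.castSucc) (tp i.succ) then Φ i else 0 := by
  classical
  refine ⟨∑ i : Fin N, SimpleFunc.piecewise (Set.Ioc (tp i.castSucc) (tp i.succ))
    measurableSet_Ioc (SimpleFunc.const ℝ (Φ i)) (SimpleFunc.const ℝ 0), fun s => ?_⟩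
  have : ∀ S : Finset (Fin N), (∑ i ∈ S, SimpleFunc.piecewise
    (Set.Ioc (tp i.castSucc) (tp i.succ))
    measurableSet_Ioc (SimpleFunc.const ℝ (Φ i)) (SimpleFunc.const ℝ 0)) s = ∑ i ∈ S,
      if s ∈ Set.Ioc (tp i.castSucc) (tp i.succ) then Φ i else 0 := by
    intro S
    induction S using Finset.induction_on with
    | empty => simp
    | insert a S ha ih =>
      rw [Finset.sum_insert ha, Finset.sum_insert ha, SimpleFunc.add_apply, ih,
        SimpleFunc.piecewise_apply]
      congr 1
      split_ifs <;> rfl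
  exact this _

lemma aux_stepHS (bG : HilbertBasis ℕ ℝ G) (T : ℝ) (ψ : ℝ → (G →L[ℝ] H)) (h : IsStepHS bG T ψ) :
    ∃ f : SimpleFunc ℝ (G →L[ℝ] H), (∀ s ∈ Set.Ioc 0 T, ψ s = f s) ∧
      ∀ s, Summable fun k => ‖f s (bG k)‖ ^ 2 := by
  obtain ⟨N, tp, Φ, hm, -, -, hsum, hψ⟩ := h
  obtain ⟨f, hf⟩ := aux_step_simple N tp Φ
  refine ⟨f, fun s hs => by rw [hψ s hs.1.ne', hf], fun s => ?_⟩
  rw [hf]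
  by_cases hex : ∃ i : Fin N, s ∈ Set.Ioc (tp i.castSucc) (tp i.succ)
  · obtain ⟨i, hi⟩ := hex
    rw [Finset.sum_eq_single i]
    · rw [if_pos hi]; exact hsum i
    · intro j _ hj
      rw [if_neg]
      intro hj'
      rcases lt_or_gt_of_ne hj with hlt | hlt
      · have : tp j.succ ≤ tp i.castSucc := hm.monotone (by
          rw [Fin.le_def]; simp; omega)
        linarith [hj'.2, hi.1]
      · have : tp i.succ ≤ tp j.castSucc := hm.monotone (by
          rw [Fin.le_def]; simp; omega)
        linarith [hj'.1, hi.2]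
    · simp
  · push Not at hex
    rw [Finset.sum_eq_zero]
    · simp
    · intro i _
      rw [if_neg (hex i)]

lemma aux_key (P : Measure Ω) [IsProbabilityMeasure P] (bG : HilbertBasis ℕ ℝ G) (T α : ℝ)
    (hα : 0 < α) (hα2 : α < 2) (g : ℝ → (G →L[ℝ] H)) (f : SimpleFunc ℝ (G →L[ℝ] H))
    (hgf : ∀ s ∈ Set.Ioc 0 T, g s = f s) (hsum : ∀ s, Summable fun k => ‖f s (bG k)‖ ^ 2)
    (X : Ω → H) (hX : IsIntegralOf P X T α g) :
    ∫ ω, (1 - Real.exp (-(‖X ω‖ ^ 2 / 2))) ∂P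
      ≤ ∫ t in Set.Ioc 0 T, (∑' i, ‖g t (bG i)‖ ^ 2) ^ (α / 2) ∧
    (1 - Real.exp (-(∫ t in Set.Ioc 0 T, (∑' i, ‖g t (bG i)‖ ^ 2) ^ (α / 2)))) / C4 ≤
    ∫ ω, (1 - Real.exp (-(‖X ω‖ ^ 2 / 2))) ∂P := by
  obtain ⟨hXm, hX⟩ := hX
  have e1 : ∀ F : (G →L[ℝ] H) → ℝ, ∫ t in Set.Ioc 0 T, F (g t) =
      ∑ A ∈ f.range, (volume.restrict (Set.Ioc 0 T)).real (f ⁻¹' {A}) * F A := by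
    intro F
    rw [← aux_simple_integral f (volume.restrict (Set.Ioc 0 T)) F]
    exact setIntegral_congr_fun measurableSet_Ioc fun t ht => by simp only [hgf t ht]
  rw [e1 (fun A => (∑' i, ‖A (bG i)‖ ^ 2) ^ (α / 2))]
  refine aux_main P X hXm bG f.range _ (fun A => measureReal_nonneg) (α / 2) (by linarith)
    (by linarith) ?_ ?_
  · intro A hA
    obtain ⟨t, rfl⟩ := SimpleFunc.mem_range.1 hA
    exact hsum t
  · intro u
    rw [hX u, e1 (fun A => ‖ContinuousLinearMap.adjoint A u‖ ^ α)]
    congr 3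
    refine Finset.sum_congr rfl fun A _ => ?_
    rw [← Real.rpow_natCast, ← Real.rpow_mul (norm_nonneg _)]
    congr 2
    push_cast; ring

end Simple

/-- Let `L` be the canonical `α`-stable cylindrical Lévy process on `G`,
`α ∈ (0,2)`, and `(ψ_n)` a sequence of `L₂(G,H)`-valued step functions.  Then
`∫₀^T ‖ψ_n(t)‖_HS^α dt → 0` if and only if
`sup_{γ ∈ S^{1,op}_det} E[‖∫₀^T γψ_n dL‖ ∧ 1] → 0`. -/
theorem stmt9
    (P : Measure Ω) (hP : IsProbabilityMeasure P)
    (bG : HilbertBasis ℕ ℝ G)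
    (T : ℝ) (hT : 0 < T)
    (α : ℝ) (hα : 0 < α) (hα2 : α < 2)
    (ψ : ℕ → ℝ → (G →L[ℝ] H))
    (hstep : ∀ n, IsStepHS bG T (ψ n))
    -- the probability space is rich enough to carry all the stochastic integrals:
    (hex : ∀ f : ℝ → (G →L[ℝ] H), IsStepHS bG T f →
      ∃ X : Ω → H, IsIntegralOf P X T α f) :
    Tendsto (fun n => ∫ t in Set.Ioc 0 T, (∑' i, ‖ψ n t (bG i)‖ ^ 2) ^ (α / 2))
        atTop (𝓝 0)
      ↔ (∀ ε : ℝ, 0 < ε → ∃ n₀ : ℕ, ∀ n ≥ n₀,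
          ∀ γ : ℝ → (H →L[ℝ] H), IsStepOp1 T γ →
            ∀ X : Ω → H, IsIntegralOf P X T α (fun t => (γ t).comp (ψ n t)) →
              ∫ ω, min ‖X ω‖ 1 ∂P ≤ ε) := by
  have hC := C4_pos
  constructor
  · intro hlim ε hε
    have hev : ∀ᶠ n in atTop, ∫ t in Set.Ioc 0 T, (∑' i, ‖ψ n t (bG i)‖ ^ 2) ^ (α / 2)
        < ε ^ 2 / 3 := (tendsto_order.1 hlim).2 _ (by positivity)
    obtain ⟨n₀, hn₀⟩ := eventually_atTop.1 hev
    refine ⟨n₀, fun n hn γ hγ X hX => ?_⟩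
    obtain ⟨f, hf, hsum⟩ := aux_stepHS bG T (ψ n) (hstep n)
    obtain ⟨hγ1, M, sp, Γop, -, -, -, hγs⟩ := hγ
    obtain ⟨k, hk⟩ := aux_step_simple M sp Γop
    have hk' : ∀ s ∈ Set.Ioc 0 T, γ s = k s := fun s hs => by rw [hγs s hs.1.ne', hk]
    let h : SimpleFunc ℝ (G →L[ℝ] H) := (SimpleFunc.pair k f).map fun p => p.1.comp p.2
    have hh : ∀ s, h s = (k s).comp (f s) := fun s => rfl
    have hle : ∀ s ∈ Set.Ioc 0 T, ∀ i, ‖((γ s).comp (ψ n s)) (bG i)‖ ^ 2 ≤ ‖ψ n s (bG i)‖ ^ 2 := by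
      intro s _ i
      refine pow_le_pow_left₀ (norm_nonneg _) ?_ 2
      exact ((γ s).le_opNorm _).trans (mul_le_of_le_one_left (norm_nonneg _) (hγ1 s))
    have hsumh : ∀ s, Summable fun i => ‖h s (bG i)‖ ^ 2 := by
      intro s
      refine ((hsum s).mul_left (‖k s‖ ^ 2)).of_nonneg_of_le (fun _ => sq_nonneg _) fun i => ?_
      rw [← mul_pow]
      exact pow_le_pow_left₀ (norm_nonneg _) ((k s).le_opNorm _) 2
    have hgh : ∀ s ∈ Set.Ioc 0 T, (γ s).comp (ψ n s) = h s := fun s hs => by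
      rw [hh, hk' s hs, hf s hs]
    have hkey := (aux_key P bG T α hα hα2 _ h hgh hsumh X hX).1
    have hint : ∀ (g : ℝ → (G →L[ℝ] H)) (f : SimpleFunc ℝ (G →L[ℝ] H)),
        (∀ s ∈ Set.Ioc 0 T, g s = f s) →
        IntegrableOn (fun t => (∑' i, ‖g t (bG i)‖ ^ 2) ^ (α / 2)) (Set.Ioc 0 T) := by
      intro g f hgf
      have h1 : Integrable (f.map fun A => (∑' i, ‖A (bG i)‖ ^ 2) ^ (α / 2))
        (volume.restrict (Set.Ioc 0 T)) := SimpleFunc.integrable_of_isFiniteMeasure _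
      refine IntegrableOn.congr_fun h1 (fun t ht => ?_) measurableSet_Ioc
      simp [hgf t ht]
    have hmono : ∫ t in Set.Ioc 0 T, (∑' i, ‖((γ t).comp (ψ n t)) (bG i)‖ ^ 2) ^ (α / 2) ≤
        ∫ t in Set.Ioc 0 T, (∑' i, ‖ψ n t (bG i)‖ ^ 2) ^ (α / 2) := by
      refine setIntegral_mono_on (hint _ h hgh) (hint _ f hf) measurableSet_Ioc fun t ht => ?_
      refine Real.rpow_le_rpow (tsum_nonneg fun _ => sq_nonneg _) ?_ (by positivity)
      refine Summable.tsum_le_tsum (hle t ht) ?_ ?_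
      · rw [hgh t ht]; exact hsumh t
      · rw [hf t ht]; exact hsum t
    have hXm : Measurable X := hX.1
    have hi1 : Integrable (fun ω => 1 - Real.exp (-(‖X ω‖ ^ 2 / 2))) P :=
      (integrable_const _).sub (aux_int_exp P (fun ω => ‖X ω‖ ^ 2 / 2) (by fun_prop)
        fun ω => by positivity)
    have hpt : ∀ ω, min ‖X ω‖ 1 ≤ ε / 2 + 3 / (2 * ε) * (1 - Real.exp (-(‖X ω‖ ^ 2 / 2))) := by
      intro ω
      have hx := norm_nonneg (X ω)
      generalize ‖X ω‖ = x at hx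
      have h1 : Real.exp (-(x ^ 2 / 2)) ≤ 1 / (1 + x ^ 2 / 2) := by
        rw [Real.exp_neg, ← one_div]
        apply one_div_le_one_div_of_le (by positivity)
        linarith [Real.add_one_le_exp (x ^ 2 / 2)]
      have h2 : (min x 1) ^ 2 ≤ 3 * (1 - 1 / (1 + x ^ 2 / 2)) := by
        have e : 3 * (1 - 1 / (1 + x ^ 2 / 2)) = 3 * x ^ 2 / (2 + x ^ 2) := by field_simp; ring
        rw [e, le_div_iff₀ (by positivity)]
        rcases le_total x 1 with hx1 | hx1
        · rw [min_eq_left hx1]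
          have : x ^ 2 ≤ 1 := by nlinarith
          nlinarith [sq_nonneg x]
        · rw [min_eq_right hx1]; nlinarith
      have h3 : (min x 1) ^ 2 ≤ 3 * (1 - Real.exp (-(x ^ 2 / 2))) := by linarith
      generalize Real.exp (-(x ^ 2 / 2)) = y at h3
      generalize min x 1 = m at h3
      have e : ε / 2 + 3 / (2 * ε) * (1 - y) = (ε ^ 2 + 3 * (1 - y)) / (2 * ε) := by field_simp
      rw [e, le_div_iff₀ (by positivity)]
      nlinarith [sq_nonneg (m - ε)]
    have hfin : ∫ ω, min ‖X ω‖ 1 ∂P ≤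
        ∫ ω, (ε / 2 + 3 / (2 * ε) * (1 - Real.exp (-(‖X ω‖ ^ 2 / 2)))) ∂P := by
      refine integral_mono_of_nonneg (Eventually.of_forall fun ω => ?_)
        ((integrable_const _).add (hi1.const_mul _)) (Eventually.of_forall hpt)
      exact le_min (norm_nonneg _) zero_le_one
    rw [integral_add (integrable_const _) (hi1.const_mul _), integral_const_mul] at hfin
    simp only [integral_const, probReal_univ, one_smul] at hfin
    have hb : ∫ ω, (1 - Real.exp (-(‖X ω‖ ^ 2 / 2))) ∂P ≤ ε ^ 2 / 3 :=
      (hkey.trans hmono).trans (hn₀ n hn).le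
    have hb2 : 3 / (2 * ε) * ∫ ω, (1 - Real.exp (-(‖X ω‖ ^ 2 / 2))) ∂P
        ≤ 3 / (2 * ε) * (ε ^ 2 / 3) := mul_le_mul_of_nonneg_left hb (by positivity)
    have e : 3 / (2 * ε) * (ε ^ 2 / 3) = ε / 2 := by field_simp
    linarith
  · intro hyp
    rw [Metric.tendsto_atTop]
    intro δ hδ
    have hexp : Real.exp (-δ) < 1 := by
      rw [← Real.exp_zero]
      exact Real.exp_lt_exp.2 (by linarith)
    obtain ⟨n₀, hn₀⟩ := hyp ((1 - Real.exp (-δ)) / (2 * C4)) (div_pos (by linarith) (by linarith))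
    refine ⟨n₀, fun n hn => ?_⟩
    classical
    obtain ⟨f, hf, hsum⟩ := aux_stepHS bG T (ψ n) (hstep n)
    obtain ⟨X, hX⟩ := hex (ψ n) (hstep n)
    have hkey := (aux_key P bG T α hα hα2 _ f hf hsum X hX).2
    set I := ∫ t in Set.Ioc 0 T, (∑' i, ‖ψ n t (bG i)‖ ^ 2) ^ (α / 2) with hI
    have hI0 : 0 ≤ I := integral_nonneg fun t => Real.rpow_nonneg
      (tsum_nonneg fun _ => sq_nonneg _) _
    let γ : ℝ → (H →L[ℝ] H) := fun s => if s ∈ Set.Ioc 0 T then ContinuousLinearMap.id ℝ H else 0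
    have hγ : IsStepOp1 T γ := by
      refine ⟨fun s => ?_, 1, ![0, T], fun _ => ContinuousLinearMap.id ℝ H, ?_, rfl, rfl, ?_⟩
      · simp only [γ]
        split_ifs
        · exact ContinuousLinearMap.norm_id_le
        · simp
      · rw [Fin.strictMono_iff_lt_succ]
        intro i
        fin_cases i
        simpa using hT
      · intro s _
        simp only [γ, Set.mem_Ioc, Fin.sum_univ_one]
        congr
    have hXγ : IsIntegralOf P X T α (fun t => (γ t).comp (ψ n t)) := by
      refine ⟨hX.1, fun u => ?_⟩
      rw [hX.2 u]
      congr 3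
      refine setIntegral_congr_fun measurableSet_Ioc fun t ht => ?_
      have : γ t = ContinuousLinearMap.id ℝ H := if_pos ht
      simp only [this, ContinuousLinearMap.id_comp]
    have hb := hn₀ n hn γ hγ X hXγ
    have hXm : Measurable X := hX.1
    have hup : ∫ ω, (1 - Real.exp (-(‖X ω‖ ^ 2 / 2))) ∂P ≤ ∫ ω, min ‖X ω‖ 1 ∂P := by
      refine integral_mono_of_nonneg (Eventually.of_forall fun ω => ?_) ?_
        (Eventually.of_forall fun ω => ?_)
      · have : Real.exp (-(‖X ω‖ ^ 2 / 2)) ≤ 1 := Real.exp_le_one_iff.2 (by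
          have : 0 ≤ ‖X ω‖ ^ 2 / 2 := by positivity
          linarith)
        show 0 ≤ 1 - Real.exp (-(‖X ω‖ ^ 2 / 2))
        linarith
      · refine (integrable_const (1 : ℝ)).mono' (Measurable.aestronglyMeasurable (by fun_prop))
          (Eventually.of_forall fun ω => ?_)
        rw [Real.norm_of_nonneg (le_min (norm_nonneg _) zero_le_one)]
        exact min_le_right _ _
      · have hx := norm_nonneg (X ω)
        show 1 - Real.exp (-(‖X ω‖ ^ 2 / 2)) ≤ min ‖X ω‖ 1
        generalize ‖X ω‖ = x at hx
        have h1 := Real.add_one_le_exp (-(x ^ 2 / 2))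
        have h2 := Real.exp_pos (-(x ^ 2 / 2))
        refine le_min ?_ (by linarith)
        rcases le_total x 1 with hx1 | hx1
        · nlinarith
        · linarith
    have h8 : (1 - Real.exp (-I)) / C4 ≤ (1 - Real.exp (-δ)) / (2 * C4) :=
      hkey.trans (hup.trans hb)
    rw [div_le_div_iff₀ hC (by linarith)] at h8
    have h9 : Real.exp (-δ) < Real.exp (-I) := by
      by_contra hcon
      push Not at hcon
      nlinarith
    have h10 : I < δ := by linarith [Real.exp_lt_exp.1 h9]
    rw [Real.dist_eq, sub_zero, abs_of_nonneg hI0]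
    exact h10
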